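/- Let n ≥ 2, A the Cartan matrix of type A_n, and ι an admissible sequence adapted to A. For every tableau T = [j_1,…,j_k]^A_s ∈ Tab_{A,ι}, every m ≥ 1 and every j ∈ I: (a) if there exists i ∈ [1,k] with j_i = j, j_{i+1} ≠ j+1 and m = s+k−i+P(j), then S_{m,j}T = [j_1,…,j_{i−1}, j+1, j_{i+1},…,j_k]^A_s; (b) if there exists i ∈ [1,k] with j_i = j+1, j_{i−1} ≠ j and m = s+k−i+1+P(j), then S_{m,j}T = [j_1,…,j_{i−1}, j, j_{i+1},…,j_k]^A_s; (c) otherwise S_{m,j}T = T. In particular, Tab_{A,ι} is closed under all operators S_{m,j}. -/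

import Mathlib

noncomputable section

/-- The coordinate linear form `x_k` (as a coefficient vector). -/
def xc (k : ℕ) : ℕ → ℚ := fun l => if l = k then 1 else 0

/-- Cartan matrix of type `A_n`. -/
def cartanA (_n : ℕ) (i j : ℕ) : ℤ :=
  if i = j then 2 else if i + 1 = j ∨ j + 1 = i then -1 else 0

/-- Cartan matrix of type `B_n`. -/
def cartanB (n : ℕ) (i j : ℕ) : ℤ :=
  if i = j then 2
  else if i = n ∧ j = n - 1 then -2
  else if i + 1 = j ∨ j + 1 = i then -1 else 0

/-- Cartan matrix of type `C_n`. -/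
def cartanC (n : ℕ) (i j : ℕ) : ℤ :=
  if i = j then 2
  else if i = n - 1 ∧ j = n then -2
  else if i + 1 = j ∨ j + 1 = i then -1 else 0

/-- Cartan matrix of type `D_n`. -/
def cartanD (n : ℕ) (i j : ℕ) : ℤ :=
  if i = j then 2
  else if (i = n - 1 ∧ j = n) ∨ (i = n ∧ j = n - 1) then 0
  else if (i + 1 = j ∨ j + 1 = i) ∨ (i = n ∧ j = n - 2) ∨ (i = n - 2 ∧ j = n) then -1
  else 0

/-- `ι` (with positions indexed by `k ≥ 1`) takes values in `{1,…,n}`, has no two equal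
consecutive entries, and every index occurs infinitely often. -/
def Admissible (n : ℕ) (ι : ℕ → ℕ) : Prop :=
  (∀ k, 1 ≤ k → 1 ≤ ι k ∧ ι k ≤ n) ∧
  (∀ k, 1 ≤ k → ι k ≠ ι (k + 1)) ∧
  (∀ i, 1 ≤ i → i ≤ n → ∀ N, ∃ k, N ≤ k ∧ ι k = i)

/-- `k^+`: the next position after `k` carrying the same letter. -/
def kplus (ι : ℕ → ℕ) (k : ℕ) : ℕ := sInf {l | k < l ∧ ι l = ι k}

/-- `k^-`: the previous position (`≥ 1`) carrying the same letter, `0` if none. -/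
def kminus (ι : ℕ → ℕ) (k : ℕ) : ℕ := sSup {l | 0 < l ∧ l < k ∧ ι l = ι k}

/-- The linear form `β_k` (with `β_0 = 0`). -/
def beta (A : ℕ → ℕ → ℤ) (ι : ℕ → ℕ) (k : ℕ) : ℕ → ℚ :=
  if k = 0 then 0
  else xc k + (∑ j ∈ Finset.Ioo k (kplus ι k), (A (ι k) (ι j) : ℚ) • xc j) + xc (kplus ι k)

/-- The piecewise-linear operator `S_k`. -/
def Sop (A : ℕ → ℕ → ℤ) (ι : ℕ → ℕ) (k : ℕ) (φ : ℕ → ℚ) : ℕ → ℚ :=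
  if 0 < φ k then φ - φ k • beta A ι k
  else φ - φ k • beta A ι (kminus ι k)

/-- Membership in `Ξ_ι`: forms obtained from some `x_{j_0}` by finitely many operators `S_k`. -/
inductive XiMem (A : ℕ → ℕ → ℤ) (ι : ℕ → ℕ) : (ℕ → ℚ) → Prop
  | base (k : ℕ) (hk : 1 ≤ k) : XiMem A ι (xc k)
  | step (k : ℕ) (hk : 1 ≤ k) (φ : ℕ → ℚ) (h : XiMem A ι φ) : XiMem A ι (Sop A ι k φ)

/-- The set `Ξ_ι`. -/
def Xi (A : ℕ → ℕ → ℤ) (ι : ℕ → ℕ) : Set (ℕ → ℚ) := { φ | XiMem A ι φ }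

/-- Forms obtained from a set `g` of generators by finitely many operators `S_k`. -/
inductive XiMemFrom (A : ℕ → ℕ → ℤ) (ι : ℕ → ℕ) (g : Set (ℕ → ℚ)) : (ℕ → ℚ) → Prop
  | base (φ : ℕ → ℚ) (h : φ ∈ g) : XiMemFrom A ι g φ
  | step (k : ℕ) (hk : 1 ≤ k) (φ : ℕ → ℚ) (h : XiMemFrom A ι g φ) :
      XiMemFrom A ι g (Sop A ι k φ)

/-- `ι` is adapted to the Cartan matrix `A`: for `i ≠ j` with `a_{i,j} ≠ 0`, consecutive
members of the subsequence of `ι` consisting of the letters `i`, `j` are distinct. -/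
def Adapted (n : ℕ) (A : ℕ → ℕ → ℤ) (ι : ℕ → ℕ) : Prop :=
  ∀ i j, 1 ≤ i → i ≤ n → 1 ≤ j → j ≤ n → i ≠ j → A i j ≠ 0 →
    ∀ k l, 1 ≤ k → k < l → (ι k = i ∨ ι k = j) → (ι l = i ∨ ι l = j) →
      (∀ m, k < m → m < l → ι m ≠ i ∧ ι m ≠ j) → ι k ≠ ι l

/-- Position of the first occurrence of the letter `i` in `ι`. -/
def firstOcc (ι : ℕ → ℕ) (i : ℕ) : ℕ := sInf {k | 1 ≤ k ∧ ι k = i}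

/-- `p_{i,j} = 1` iff the first occurrence of `i` precedes the first occurrence of `j`. -/
def pval (ι : ℕ → ℕ) (i j : ℕ) : ℕ := if firstOcc ι i < firstOcc ι j then 1 else 0

/-- The function `P(k)` for types A, B, C (and `P(k) = 0` for `k > n`, `k ≤ 1`). -/
def PABC (ι : ℕ → ℕ) (n k : ℕ) : ℕ :=
  if k ≤ n then ∑ t ∈ Finset.Icc 2 k, pval ι t (t - 1) else 0

/-- The function `P(k)` for type D. -/
def PD (ι : ℕ → ℕ) (n k : ℕ) : ℕ :=
  if k = n then (∑ t ∈ Finset.Icc 2 (n - 2), pval ι t (t - 1)) + pval ι n (n - 2)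
  else if k ≤ n then ∑ t ∈ Finset.Icc 2 k, pval ι t (t - 1) else 0

/-- `occPos ι j s`: the position of the `s`-th occurrence of the letter `j` in `ι`
(`0` for `s = 0`). -/
def occPos (ι : ℕ → ℕ) (j : ℕ) : ℕ → ℕ
  | 0 => 0
  | s + 1 => sInf {k | occPos ι j s < k ∧ ι k = j}

/-- The double-indexed coordinate form `x_{s,j}`, with the conventions
`x_{s,0} = x_{s,n+1} = 0` and `x_{s,j} = 0` for `s ≤ 0`. -/
def xsj (ι : ℕ → ℕ) (n : ℕ) (s : ℤ) (j : ℕ) : ℕ → ℚ :=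
  if 1 ≤ s ∧ 1 ≤ j ∧ j ≤ n then xc (occPos ι j s.toNat) else 0

/-- The double-indexed form `β_{s,j}`. -/
def betasj (A : ℕ → ℕ → ℤ) (ι : ℕ → ℕ) (s : ℤ) (j : ℕ) : ℕ → ℚ :=
  beta A ι (occPos ι j s.toNat)

/-- The double-indexed operator `S_{m,j}`. -/
def Ssj (A : ℕ → ℕ → ℤ) (ι : ℕ → ℕ) (m j : ℕ) (φ : ℕ → ℚ) : ℕ → ℚ :=
  Sop A ι (occPos ι j m) φ

/- Entries of the ordered sets `J_X` are encoded as natural numbers: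
an unbarred entry `j ∈ {1,…,n}` is encoded as `j`, a barred entry `j̄` is
encoded as `2n+1-j` (so that `n̄ = n+1, …, 1̄ = 2n` and the total order of
`J_B = J_C` is the numerical order), and the extra symbol `ovl(n+1)` of
types C and D is encoded as `0`. -/

/-- The box of type A. -/
def boxA (ι : ℕ → ℕ) (n : ℕ) (s : ℤ) (j : ℕ) : ℕ → ℚ :=
  xsj ι n (s + (PABC ι n j : ℤ)) j - xsj ι n (s + (PABC ι n (j - 1) : ℤ) + 1) (j - 1)

/-- The box of type B. -/
def boxB (ι : ℕ → ℕ) (n : ℕ) (s : ℤ) (e : ℕ) : ℕ → ℚ :=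
  if e ≤ n then
    xsj ι n (s + (PABC ι n e : ℤ)) e - xsj ι n (s + (PABC ι n (e - 1) : ℤ) + 1) (e - 1)
  else
    xsj ι n (s + (PABC ι n (2 * n - e) : ℤ) + (n : ℤ) - ((2 * n + 1 - e : ℕ) : ℤ) + 1)
        (2 * n - e)
      - xsj ι n (s + (PABC ι n (2 * n + 1 - e) : ℤ) + (n : ℤ) - ((2 * n + 1 - e : ℕ) : ℤ) + 1)
          (2 * n + 1 - e)

/-- The box of type C (`ovl(n+1)` encoded as `0`). -/
def boxC (ι : ℕ → ℕ) (n : ℕ) (s : ℤ) (e : ℕ) : ℕ → ℚ :=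
  if e = 0 then xsj ι n (s + (PABC ι n n : ℤ)) n
  else if e < n then
    xsj ι n (s + (PABC ι n e : ℤ)) e - xsj ι n (s + (PABC ι n (e - 1) : ℤ) + 1) (e - 1)
  else if e = n then
    (2 : ℚ) • xsj ι n (s + (PABC ι n n : ℤ)) n
      - xsj ι n (s + (PABC ι n (n - 1) : ℤ) + 1) (n - 1)
  else if e = n + 1 then
    xsj ι n (s + (PABC ι n (n - 1) : ℤ) + 1) (n - 1)
      - (2 : ℚ) • xsj ι n (s + (PABC ι n n : ℤ) + 1) n
  else
    xsj ι n (s + (PABC ι n (2 * n - e) : ℤ) + (n : ℤ) - ((2 * n + 1 - e : ℕ) : ℤ) + 1)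
        (2 * n - e)
      - xsj ι n (s + (PABC ι n (2 * n + 1 - e) : ℤ) + (n : ℤ) - ((2 * n + 1 - e : ℕ) : ℤ) + 1)
          (2 * n + 1 - e)

/-- The box of type D (`ovl(n+1)` encoded as `0`, `n̄` as `n+1`, `ovl(n-1)` as `n+2`). -/
def boxD (ι : ℕ → ℕ) (n : ℕ) (s : ℤ) (e : ℕ) : ℕ → ℚ :=
  if e = 0 then xsj ι n (s + (PD ι n n : ℤ)) n
  else if e ≤ n - 2 then
    xsj ι n (s + (PD ι n e : ℤ)) e - xsj ι n (s + (PD ι n (e - 1) : ℤ) + 1) (e - 1)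
  else if e = n - 1 then
    xsj ι n (s + (PD ι n (n - 1) : ℤ)) (n - 1) + xsj ι n (s + (PD ι n n : ℤ)) n
      - xsj ι n (s + (PD ι n (n - 2) : ℤ) + 1) (n - 2)
  else if e = n then
    xsj ι n (s + (PD ι n n : ℤ)) n - xsj ι n (s + (PD ι n (n - 1) : ℤ) + 1) (n - 1)
  else if e = n + 1 then
    xsj ι n (s + (PD ι n (n - 1) : ℤ)) (n - 1) - xsj ι n (s + (PD ι n n : ℤ) + 1) n
  else if e = n + 2 then
    xsj ι n (s + (PD ι n (n - 2) : ℤ) + 1) (n - 2)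
      - xsj ι n (s + (PD ι n (n - 1) : ℤ) + 1) (n - 1)
      - xsj ι n (s + (PD ι n n : ℤ) + 1) n
  else
    xsj ι n (s + (PD ι n (2 * n - e) : ℤ) + (n : ℤ) - ((2 * n + 1 - e : ℕ) : ℤ)) (2 * n - e)
      - xsj ι n (s + (PD ι n (2 * n + 1 - e) : ℤ) + (n : ℤ) - ((2 * n + 1 - e : ℕ) : ℤ))
          (2 * n + 1 - e)

/-- The column tableau `[j_1,…,j_k]_s = Σ_{i=1}^k box_{s+k-i}(j_i)`. -/
def tab (box : ℤ → ℕ → ℕ → ℚ) (s : ℤ) (k : ℕ) (j : ℕ → ℕ) : ℕ → ℚ :=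
  ∑ i ∈ Finset.Icc 1 k, box (s + (k : ℤ) - (i : ℤ)) (j i)

/-- The set `Tab_{A,ι}`. -/
def TabA (ι : ℕ → ℕ) (n : ℕ) : Set (ℕ → ℚ) :=
  { T | ∃ (k : ℕ) (s : ℤ) (j : ℕ → ℕ),
      1 ≤ k ∧ k ≤ n ∧
      (∀ i, 1 ≤ i → i ≤ k → 1 ≤ j i ∧ j i ≤ n + 1) ∧
      (∀ i, 1 ≤ i → i < k → j i < j (i + 1)) ∧
      1 - (PABC ι n k : ℤ) ≤ s ∧
      T = tab (boxA ι n) s k j }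

/-- `|·|` on encoded entries of `J_B = J_C`. -/
def absJ (n e : ℕ) : ℕ := if e ≤ n then e else 2 * n + 1 - e

/-- The set `Tab_{B,ι}`. -/
def TabB (ι : ℕ → ℕ) (n : ℕ) : Set (ℕ → ℚ) :=
  { T | ∃ (k : ℕ) (s : ℤ) (j : ℕ → ℕ),
      1 ≤ k ∧ k ≤ n ∧
      (∀ i, 1 ≤ i → i ≤ k → 1 ≤ j i ∧ j i ≤ 2 * n) ∧
      (∀ i, 1 ≤ i → i < k → j i < j (i + 1)) ∧
      (k = n → ∀ l m, 1 ≤ l → l < m → m ≤ k → absJ n (j l) ≠ absJ n (j m)) ∧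
      1 - (PABC ι n k : ℤ) ≤ s ∧
      T = tab (boxB ι n) s k j }

/-- Defining conditions of `Tab_{C,ι}` on the data `(k,s,j)`. -/
def TabCcond (ι : ℕ → ℕ) (n : ℕ) (k : ℕ) (s : ℤ) (j : ℕ → ℕ) : Prop :=
  (1 ≤ k ∧ k ≤ n - 1 ∧
    (∀ i, 1 ≤ i → i ≤ k → 1 ≤ j i ∧ j i ≤ 2 * n) ∧
    (∀ i, 1 ≤ i → i < k → j i < j (i + 1)) ∧
    1 - (PABC ι n k : ℤ) ≤ s)
  ∨
  (j 1 = 0 ∧ 1 ≤ k ∧ k ≤ n + 1 ∧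
    (∀ i, 2 ≤ i → i ≤ k → n + 1 ≤ j i ∧ j i ≤ 2 * n) ∧
    (∀ i, 2 ≤ i → i < k → j i < j (i + 1)) ∧
    1 - (PABC ι n n : ℤ) ≤ s)

/-- The set `Tab_{C,ι}`. -/
def TabC (ι : ℕ → ℕ) (n : ℕ) : Set (ℕ → ℚ) :=
  { T | ∃ k s j, TabCcond ι n k s j ∧ T = tab (boxC ι n) s k j }

/-- The partial order on (encoded) `J_D`: `a ≤ b` iff `a = b`, or `a < b` numerically and
`(a,b)` is not the incomparable pair `(n, n̄)`. -/
def leD (n a b : ℕ) : Prop := a = b ∨ (a < b ∧ ¬(a = n ∧ b = n + 1))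

/-- Defining conditions of `Tab_{D,ι}` on the data `(k,s,j)`. -/
def TabDcond (ι : ℕ → ℕ) (n : ℕ) (k : ℕ) (s : ℤ) (j : ℕ → ℕ) : Prop :=
  (1 ≤ k ∧ k ≤ n - 2 ∧
    (∀ i, 1 ≤ i → i ≤ k → 1 ≤ j i ∧ j i ≤ 2 * n) ∧
    (∀ i, 1 ≤ i → i < k → ¬ leD n (j (i + 1)) (j i)) ∧
    1 - (PD ι n k : ℤ) ≤ s)
  ∨
  (j 1 = 0 ∧ 1 ≤ k ∧ k ≤ n + 1 ∧
    (∀ i, 2 ≤ i → i ≤ k → n + 1 ≤ j i ∧ j i ≤ 2 * n) ∧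
    (∀ i, 2 ≤ i → i < k → j i < j (i + 1)) ∧
    (k % 2 = 0 → 1 - (PD ι n (n - 1) : ℤ) ≤ s) ∧
    (k % 2 = 1 → 1 - (PD ι n n : ℤ) ≤ s))

/-- The set `Tab_{D,ι}`. -/
def TabD (ι : ℕ → ℕ) (n : ℕ) : Set (ℕ → ℚ) :=
  { T | ∃ k s j, TabDcond ι n k s j ∧ T = tab (boxD ι n) s k j }

end

/-!
If `a_{i,j} ≠ 0`, the occurrences of `i` and `j` in an adapted sequence interlace, so between the
`s`-th and the `(s+1)`-st occurrence of `j` there is exactly one occurrence of `i`, namely the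
`(s + p_{i,j})`-th. In type A this gives
`β_{s,j} = x_{s,j} - x_{s+p_{j-1,j},j-1} - x_{s+p_{j+1,j},j+1} + x_{s+1,j}`,
and the shifts `P` are chosen precisely so that `B_t(j+1) = B_t(j) - β_{t+P(j),j}`.
In a column tableau, `x_{m,j}` can only come with sign `+` from an entry `j` and with sign `-` from
an entry `j+1`. The entries increase strictly, so each sign occurs at most once, and the two
cancel exactly when `j` and `j+1` are adjacent entries. The coefficient of `x_{m,j}` is therefore
`1`, `-1` or `0`, and these are the cases in which `S_{m,j}` raises an entry, lowers one, or acts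
trivially.
-/

open Filter

section Occurrences

variable {ι : ℕ → ℕ} {i j : ℕ}

theorem occPos_succ_le {s l : ℕ} (hl : occPos ι j s < l) (hlj : ι l = j) :
    occPos ι j (s + 1) ≤ l :=
  Nat.sInf_le ⟨hl, hlj⟩

theorem occPos_succ_spec (hj : ∃ᶠ k in atTop, ι k = j) (s : ℕ) :
    occPos ι j s < occPos ι j (s + 1) ∧ ι (occPos ι j (s + 1)) = j :=
  Nat.sInf_mem (frequently_atTop'.1 hj (occPos ι j s))

theorem occPos_strictMono (hj : ∃ᶠ k in atTop, ι k = j) : StrictMono (occPos ι j) :=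
  strictMono_nat_of_lt_succ fun s => (occPos_succ_spec hj s).1

theorem apply_occPos (hj : ∃ᶠ k in atTop, ι k = j) {s : ℕ} (hs : 1 ≤ s) :
    ι (occPos ι j s) = j := by
  obtain ⟨r, rfl⟩ := Nat.exists_eq_add_of_le' hs
  exact (occPos_succ_spec hj r).2

theorem occPos_pos (hj : ∃ᶠ k in atTop, ι k = j) {s : ℕ} (hs : 1 ≤ s) : 0 < occPos ι j s :=
  occPos_strictMono hj (Nat.pos_of_ne_zero (Nat.one_le_iff_ne_zero.1 hs))

theorem occPos_eq_occPos_iff (hi : ∃ᶠ k in atTop, ι k = i) (hj : ∃ᶠ k in atTop, ι k = j)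
    {s t : ℕ} (hs : 1 ≤ s) (ht : 1 ≤ t) : occPos ι i s = occPos ι j t ↔ i = j ∧ s = t := by
  refine ⟨fun h => ?_, fun ⟨hij, hst⟩ => by rw [hij, hst]⟩
  obtain rfl : i = j := by rw [← apply_occPos hi hs, h, apply_occPos hj ht]
  exact ⟨rfl, (occPos_strictMono hi).injective h⟩

theorem kplus_occPos (hj : ∃ᶠ k in atTop, ι k = j) {s : ℕ} (hs : 1 ≤ s) :
    kplus ι (occPos ι j s) = occPos ι j (s + 1) := by
  rw [kplus, apply_occPos hj hs, occPos]

theorem kminus_occPos_succ (hj : ∃ᶠ k in atTop, ι k = j) (s : ℕ) :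
    kminus ι (occPos ι j (s + 1)) = occPos ι j s := by
  rw [kminus, (occPos_succ_spec hj s).2]
  have le_occPos : ∀ l, l < occPos ι j (s + 1) → ι l = j → l ≤ occPos ι j s := fun l hl hlj =>
    not_lt.1 fun h => hl.not_ge (occPos_succ_le h hlj)
  rcases Nat.eq_zero_or_pos s with rfl | hs
  · have : {l | 0 < l ∧ l < occPos ι j (0 + 1) ∧ ι l = j} = ∅ :=
      Set.eq_empty_of_forall_notMem fun l ⟨hl0, hl, hlj⟩ => hl0.not_ge (le_occPos l hl hlj)
    rw [this, csSup_empty]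
    rfl
  · exact IsGreatest.csSup_eq ⟨⟨occPos_pos hj hs, (occPos_succ_spec hj s).1, apply_occPos hj hs⟩,
      fun l ⟨_, hl, hlj⟩ => le_occPos l hl hlj⟩

theorem firstOcc_eq_occPos_one (ι : ℕ → ℕ) (j : ℕ) : firstOcc ι j = occPos ι j 1 := rfl

theorem pval_le_one (ι : ℕ → ℕ) (i j : ℕ) : pval ι i j ≤ 1 := by
  unfold pval
  split_ifs <;> omega

theorem firstOcc_ne_firstOcc (hi : ∃ᶠ k in atTop, ι k = i) (hj : ∃ᶠ k in atTop, ι k = j)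
    (hij : i ≠ j) : firstOcc ι i ≠ firstOcc ι j := fun h =>
  hij ((occPos_eq_occPos_iff hi hj le_rfl le_rfl).1 h).1

theorem pval_add_pval_swap (hi : ∃ᶠ k in atTop, ι k = i) (hj : ∃ᶠ k in atTop, ι k = j)
    (hij : i ≠ j) : pval ι i j + pval ι j i = 1 := by
  have := firstOcc_ne_firstOcc hi hj hij
  unfold pval
  split_ifs <;> omega

end Occurrences

section Alternation

variable {ι : ℕ → ℕ} {i j : ℕ}

/-- The subsequence of `ι` consisting of all occurrences of `i` and `j` alternates between `i` and
`j`. Only positions `k ≥ 1` count; `Adapted` asks for this whenever `a_{i,j} ≠ 0`. -/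
def Alternates (ι : ℕ → ℕ) (i j : ℕ) : Prop :=
  ∀ k l, 1 ≤ k → k < l → (ι k = i ∨ ι k = j) → (ι l = i ∨ ι l = j) →
    (∀ m, k < m → m < l → ι m ≠ i ∧ ι m ≠ j) → ι k ≠ ι l

theorem Alternates.symm (h : Alternates ι i j) : Alternates ι j i :=
  fun k l hk hkl hιk hιl hm => h k l hk hkl hιk.symm hιl.symm fun m h₁ h₂ => (hm m h₁ h₂).symm

theorem Alternates.occPos_succ_lt (h : Alternates ι i j) (hi : ∃ᶠ k in atTop, ι k = i) {s t : ℕ}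
    (hs : 1 ≤ s) (hlt : occPos ι j t < occPos ι i s) :
    occPos ι j (t + 1) < occPos ι i (s + 1) := by
  by_contra! hle
  obtain ⟨hnext, hιnext⟩ := occPos_succ_spec hi s
  refine h _ _ (occPos_pos hi hs) hnext (.inl (apply_occPos hi hs)) (.inl hιnext) ?_
    ((apply_occPos hi hs).trans hιnext.symm)
  exact fun m hm hm' => ⟨fun hmi => hm'.not_ge (occPos_succ_le hm hmi),
    fun hmj => hm'.not_ge (hle.trans (occPos_succ_le (hlt.trans hm) hmj))⟩

theorem Alternates.occPos_interlace (h : Alternates ι i j) (hij : i ≠ j)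
    (hi : ∃ᶠ k in atTop, ι k = i) (hj : ∃ᶠ k in atTop, ι k = j) (s : ℕ) :
    occPos ι i (s + pval ι i j) < occPos ι j (s + 1) ∧
      occPos ι j (s + 1) < occPos ι i (s + pval ι i j + 1) := by
  induction s with
  | zero =>
    have hne := firstOcc_ne_firstOcc hi hj hij
    rw [firstOcc_eq_occPos_one, firstOcc_eq_occPos_one] at hne
    rw [pval, firstOcc_eq_occPos_one, firstOcc_eq_occPos_one]
    split_ifs with hlt
    · exact ⟨hlt, h.occPos_succ_lt hi le_rfl (occPos_pos hi le_rfl)⟩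
    · exact ⟨occPos_pos hj le_rfl, lt_of_le_of_ne (not_lt.1 hlt) hne.symm⟩
  | succ s ih =>
    rw [Nat.add_right_comm s 1]
    have hlt := h.symm.occPos_succ_lt hj (Nat.le_add_left 1 s) ih.1
    exact ⟨hlt, h.occPos_succ_lt hi (Nat.le_add_left 1 _) ih.2⟩

theorem Alternates.filter_Ioo_occPos (h : Alternates ι i j) (hij : i ≠ j)
    (hi : ∃ᶠ k in atTop, ι k = i) (hj : ∃ᶠ k in atTop, ι k = j) {s : ℕ} (hs : 1 ≤ s) :
    (Finset.Ioo (occPos ι j s) (occPos ι j (s + 1))).filter (ι · = i) =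
      {occPos ι i (s + pval ι i j)} := by
  obtain ⟨r, rfl⟩ := Nat.exists_eq_add_of_le' hs
  obtain ⟨hlt₁, hlt₂⟩ := h.occPos_interlace hij hi hj r
  obtain ⟨hlt₃, hlt₄⟩ := h.occPos_interlace hij hi hj (r + 1)
  rw [Nat.add_right_comm r 1 (pval ι i j)] at hlt₃ hlt₄ ⊢
  refine Finset.eq_singleton_iff_unique_mem.2 ⟨?_, fun l hl => ?_⟩
  · exact Finset.mem_filter.2
      ⟨Finset.mem_Ioo.2 ⟨hlt₂, hlt₃⟩, apply_occPos hi (Nat.le_add_left 1 _)⟩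
  · obtain ⟨hl, hli⟩ := Finset.mem_filter.1 hl
    obtain ⟨hl₁, hl₂⟩ := Finset.mem_Ioo.1 hl
    have hge := occPos_succ_le (hlt₁.trans hl₁) hli
    exact hge.antisymm' (not_lt.1 fun hgt =>
      (hl₂.trans hlt₄).not_ge (occPos_succ_le hgt hli))

end Alternation

section Operators

variable {n : ℕ} {A : ℕ → ℕ → ℤ} {ι : ℕ → ℕ} {j : ℕ}

theorem Admissible.frequently_eq (hadm : Admissible n ι) (hj : j ∈ Set.Icc 1 n) :
    ∃ᶠ k in atTop, ι k = j :=
  frequently_atTop.2 (hadm.2.2 j hj.1 hj.2)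

theorem Adapted.alternates (hadap : Adapted n A ι) {i : ℕ} (hi : i ∈ Set.Icc 1 n)
    (hj : j ∈ Set.Icc 1 n) (hij : i ≠ j) (hA : A i j ≠ 0) : Alternates ι i j :=
  hadap i j hi.1 hi.2 hj.1 hj.2 hij hA

theorem xsj_natCast (hj : j ∈ Set.Icc 1 n) {s : ℕ} (hs : 1 ≤ s) :
    xsj ι n s j = xc (occPos ι j s) := by
  rw [xsj, if_pos ⟨by exact_mod_cast hs, hj⟩, Int.toNat_natCast]

theorem xsj_of_notMem (hj : j ∉ Set.Icc 1 n) (s : ℤ) : xsj ι n s j = 0 :=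
  if_neg fun h => hj h.2

theorem xsj_apply_occPos (hadm : Admissible n ι) (hj : j ∈ Set.Icc 1 n) {m : ℕ} (hm : 1 ≤ m)
    (t : ℤ) (e : ℕ) : xsj ι n t e (occPos ι j m) = if e = j ∧ t = m then 1 else 0 := by
  rw [xsj]
  split_ifs with hsupp heq heq
  · obtain ⟨rfl, rfl⟩ := heq
    exact if_pos rfl
  · refine if_neg fun hocc => heq ?_
    obtain ⟨rfl, rfl⟩ := (occPos_eq_occPos_iff (hadm.frequently_eq hj)
      (hadm.frequently_eq hsupp.2) hm (by omega)).1 hocc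
    exact ⟨rfl, by omega⟩
  · obtain ⟨rfl, rfl⟩ := heq
    exact absurd ⟨by exact_mod_cast hm, hj⟩ hsupp
  · rfl

theorem betasj_eq_sum (hadm : Admissible n ι) (hadap : Adapted n A ι) (hj : j ∈ Set.Icc 1 n)
    {s : ℤ} (hs : 1 ≤ s) :
    betasj A ι s j = xsj ι n s j +
      ∑ i ∈ (Finset.Icc 1 n).erase j, (A j i : ℚ) • xsj ι n (s + pval ι i j) i +
      xsj ι n (s + 1) j := by
  have hfreq := hadm.frequently_eq hj
  lift s to ℕ using by omega
  replace hs : 1 ≤ s := by exact_mod_cast hs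
  have maps_to : ∀ l ∈ Finset.Ioo (occPos ι j s) (occPos ι j (s + 1)),
      ι l ∈ (Finset.Icc 1 n).erase j := by
    intro l hl
    obtain ⟨hl₁, hl₂⟩ := Finset.mem_Ioo.1 hl
    exact Finset.mem_erase.2 ⟨fun hlj => hl₂.not_ge (occPos_succ_le hl₁ hlj),
      Finset.mem_Icc.2 (hadm.1 l (Nat.one_le_of_lt hl₁))⟩
  rw [betasj, Int.toNat_natCast, beta, if_neg (occPos_pos hfreq hs).ne', kplus_occPos hfreq hs,
    apply_occPos hfreq hs, xsj_natCast hj hs, ← Nat.cast_succ, xsj_natCast hj (by omega),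
    ← Finset.sum_fiberwise_of_maps_to maps_to]
  congr 2
  refine Finset.sum_congr rfl fun i hi => ?_
  obtain ⟨hij, hi⟩ := Finset.mem_erase.1 hi
  replace hi : i ∈ Set.Icc 1 n := Finset.mem_Icc.1 hi
  by_cases hA : A j i = 0
  · rw [hA, Int.cast_zero, zero_smul]
    refine Finset.sum_eq_zero fun l hl => ?_
    rw [(Finset.mem_filter.1 hl).2, hA, Int.cast_zero, zero_smul]
  · have hfreq_i := hadm.frequently_eq hi
    rw [(hadap.alternates hj hi hij.symm hA).symm.filter_Ioo_occPos hij hfreq_i hfreq hs,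
      Finset.sum_singleton, apply_occPos hfreq_i (by omega), ← Nat.cast_add,
      xsj_natCast hi (by omega)]

theorem Ssj_of_apply_eq_one {m : ℕ} {φ : ℕ → ℚ} (hφ : φ (occPos ι j m) = 1) :
    Ssj A ι m j φ = φ - betasj A ι m j := by
  rw [Ssj, Sop, hφ, if_pos one_pos, one_smul, betasj, Int.toNat_natCast]

theorem Ssj_of_apply_eq_neg_one (hj : ∃ᶠ k in atTop, ι k = j) {m : ℕ} (hm : 1 ≤ m) {φ : ℕ → ℚ}
    (hφ : φ (occPos ι j m) = -1) : Ssj A ι m j φ = φ + betasj A ι (m - 1) j := by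
  obtain ⟨r, rfl⟩ := Nat.exists_eq_add_of_le' hm
  rw [Ssj, Sop, hφ, if_neg (by norm_num), kminus_occPos_succ hj, neg_one_smul, sub_neg_eq_add,
    betasj, Nat.cast_succ, add_sub_cancel_right, Int.toNat_natCast]

theorem Ssj_of_apply_eq_zero {m : ℕ} {φ : ℕ → ℚ} (hφ : φ (occPos ι j m) = 0) :
    Ssj A ι m j φ = φ := by
  rw [Ssj, Sop, hφ, if_neg (lt_irrefl 0), zero_smul, sub_zero]

end Operators

section Boxes

variable {n : ℕ} {ι : ℕ → ℕ} {j : ℕ}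

theorem betasj_cartanA (hadm : Admissible n ι) (hadap : Adapted n (cartanA n) ι)
    (hj : j ∈ Set.Icc 1 n) {s : ℤ} (hs : 1 ≤ s) :
    betasj (cartanA n) ι s j = xsj ι n s j - xsj ι n (s + pval ι (j - 1) j) (j - 1)
      - xsj ι n (s + pval ι (j + 1) j) (j + 1) + xsj ι n (s + 1) j := by
  obtain ⟨hj1, hjn⟩ := hj
  let x (i : ℕ) : ℕ → ℚ := xsj ι n (s + pval ι i j) i
  have sum_single : ∀ i₀, i₀ ≠ j →
      ∑ i ∈ (Finset.Icc 1 n).erase j, (if i = i₀ then x i else 0) = x i₀ := by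
    intro i₀ hne
    rw [Finset.sum_ite_eq', ite_eq_left_iff]
    intro hmem
    refine (xsj_of_notMem (fun h => hmem ?_) _).symm
    exact Finset.mem_erase.2 ⟨hne, Finset.mem_Icc.2 h⟩
  have sum_neighbours : ∑ i ∈ (Finset.Icc 1 n).erase j, (cartanA n j i : ℚ) • x i =
      -x (j - 1) - x (j + 1) := by
    rw [← sum_single (j - 1) (by omega), ← sum_single (j + 1) (by omega),
      ← Finset.sum_neg_distrib, ← Finset.sum_sub_distrib]
    refine Finset.sum_congr rfl fun i hi => ?_
    have hne := Finset.ne_of_mem_erase hi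
    unfold cartanA
    split_ifs <;> first | omega | simp
  rw [betasj_eq_sum hadm hadap ⟨hj1, hjn⟩ hs, sum_neighbours]
  abel

theorem PABC_succ (hj1 : 1 ≤ j) (hjn : j + 1 ≤ n) :
    PABC ι n (j + 1) = PABC ι n j + pval ι (j + 1) j := by
  rw [PABC, PABC, if_pos hjn, if_pos (by omega), Finset.sum_Icc_succ_top (by omega),
    Nat.add_sub_cancel]

theorem PABC_le_PABC {i : ℕ} (hij : i ≤ j) (hjn : j ≤ n) : PABC ι n i ≤ PABC ι n j := by
  rw [PABC, PABC, if_pos hjn, if_pos (hij.trans hjn)]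
  exact Finset.sum_le_sum_of_subset (Finset.Icc_subset_Icc_right hij)

theorem PABC_add_le {i d : ℕ} (hi : 1 ≤ i) (hn : i + d ≤ n) :
    PABC ι n (i + d) ≤ PABC ι n i + d := by
  induction d with
  | zero => rfl
  | succ d ih =>
    have hsucc := PABC_succ (ι := ι) (j := i + d) (by omega) hn
    have hp := pval_le_one ι (i + d + 1) (i + d)
    have := ih (by omega)
    rw [← add_assoc i d 1]
    omega

theorem boxA_add_one (hadm : Admissible n ι) (hadap : Adapted n (cartanA n) ι)
    (hj : j ∈ Set.Icc 1 n) {t : ℤ} (ht : 1 ≤ t + PABC ι n j) :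
    boxA ι n t (j + 1) = boxA ι n t j - betasj (cartanA n) ι (t + PABC ι n j) j := by
  have next : xsj ι n (t + PABC ι n (j + 1)) (j + 1) =
      xsj ι n (t + PABC ι n j + pval ι (j + 1) j) (j + 1) := by
    by_cases hn : j + 1 ≤ n
    · rw [PABC_succ hj.1 hn, Nat.cast_add, add_assoc]
    · have hnotMem : j + 1 ∉ Set.Icc 1 n := fun h => hn h.2
      rw [xsj_of_notMem hnotMem, xsj_of_notMem hnotMem]
  have prev : xsj ι n (t + PABC ι n (j - 1) + 1) (j - 1) =
      xsj ι n (t + PABC ι n j + pval ι (j - 1) j) (j - 1) := by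
    by_cases h1 : 1 ≤ j - 1
    · obtain ⟨i, rfl⟩ := Nat.exists_eq_add_of_le' hj.1
      rw [Nat.add_sub_cancel] at h1 ⊢
      have hP := PABC_succ (ι := ι) h1 hj.2
      have hp := pval_add_pval_swap (hadm.frequently_eq (j := i) ⟨h1, by grind⟩)
        (hadm.frequently_eq hj) (by omega)
      congr 1
      omega
    · have hnotMem : j - 1 ∉ Set.Icc 1 n := fun h => h1 h.1
      rw [xsj_of_notMem hnotMem, xsj_of_notMem hnotMem]
  rw [betasj_cartanA hadm hadap hj ht, boxA, boxA, Nat.add_sub_cancel, next, prev]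
  abel

theorem boxA_apply_occPos (hadm : Admissible n ι) (hj : j ∈ Set.Icc 1 n) {m : ℕ} (hm : 1 ≤ m)
    (t : ℤ) (e : ℕ) :
    boxA ι n t e (occPos ι j m) =
      (if e = j ∧ (m : ℤ) = t + PABC ι n j then 1 else 0) -
        (if e = j + 1 ∧ (m : ℤ) = t + 1 + PABC ι n j then 1 else 0) := by
  have hj1 := hj.1
  rw [boxA, Pi.sub_apply, xsj_apply_occPos hadm hj hm, xsj_apply_occPos hadm hj hm]
  congr 1 <;> refine if_congr ⟨?_, ?_⟩ rfl rfl
  · rintro ⟨rfl, h⟩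
    exact ⟨rfl, h.symm⟩
  · rintro ⟨rfl, h⟩
    exact ⟨rfl, h.symm⟩
  · rintro ⟨rfl, h⟩
    exact ⟨by omega, by omega⟩
  · rintro ⟨rfl, h⟩
    rw [Nat.add_sub_cancel]
    exact ⟨rfl, by omega⟩

end Boxes

section Columns

variable {n k : ℕ} {c : ℕ → ℕ}

/-- `c 1, …, c k` are the entries of a column tableau of type A: they lie in `{1, …, n + 1}` and
increase strictly from each entry to the next. -/
structure IsColumn (n k : ℕ) (c : ℕ → ℕ) : Prop where
  range : ∀ i, 1 ≤ i → i ≤ k → 1 ≤ c i ∧ c i ≤ n + 1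
  lt_succ : ∀ i, 1 ≤ i → i < k → c i < c (i + 1)

theorem IsColumn.strictMonoOn (hc : IsColumn n k c) : StrictMonoOn c (Set.Icc 1 k) :=
  strictMonoOn_of_lt_add_one Set.ordConnected_Icc fun i _ hi hi' => hc.lt_succ i hi.1 hi'.2

theorem IsColumn.le_apply (hc : IsColumn n k c) {i : ℕ} (hi1 : 1 ≤ i) (hik : i ≤ k) :
    i ≤ c i := by
  induction i, hi1 using Nat.le_induction with
  | base => exact (hc.range 1 le_rfl hik).1
  | succ i hi1 ih => exact (ih (by omega)).trans_lt (hc.lt_succ i hi1 hik)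

theorem IsColumn.update (hc : IsColumn n k c) {i e : ℕ} (he1 : 1 ≤ e) (hen : e ≤ n + 1)
    (hprev : 1 < i → c (i - 1) < e) (hnext : i < k → e < c (i + 1)) :
    IsColumn n k (Function.update c i e) where
  range l hl1 hlk := by
    rcases eq_or_ne l i with rfl | hne
    · simpa only [Function.update_self] using ⟨he1, hen⟩
    · simpa only [Function.update_of_ne hne] using hc.range l hl1 hlk
  lt_succ l hl1 hlk := by
    rcases eq_or_ne l i with rfl | hne
    · simpa only [Function.update_self, Function.update_of_ne l.succ_ne_self] using hnext hlk
    rw [Function.update_of_ne hne]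
    rcases eq_or_ne (l + 1) i with rfl | hne'
    · rw [Function.update_self]
      exact hprev (Nat.lt_succ_of_le hl1)
    · simpa only [Function.update_of_ne hne'] using hc.lt_succ l hl1 hlk

theorem eq_add_one_of_apply_eq_add_one (hc : StrictMonoOn c (Set.Icc 1 k)) {a b : ℕ}
    (ha : a ∈ Set.Icc 1 k) (hb : b ∈ Set.Icc 1 k) (h : c b = c a + 1) : b = a + 1 := by
  have hab : a < b := (hc.lt_iff_lt ha hb).1 (by omega)
  by_contra hne
  have hmem : a + 1 ∈ Set.Icc 1 k := ⟨Nat.le_add_left 1 a, hab.trans_le hb.2⟩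
  have h₁ := hc ha hmem (Nat.lt_succ_self a)
  have h₂ := hc hmem hb (by omega)
  omega

theorem sum_ite_eq_ite_exists {α β R : Type*} [DecidableEq β] [AddCommMonoidWithOne R]
    {S : Finset α} {f : α → β} (hf : Set.InjOn f S) (b : β) (p : α → Prop) [DecidablePred p] :
    (∑ a ∈ S, if f a = b ∧ p a then (1 : R) else 0) =
      if ∃ a ∈ S, f a = b ∧ p a then 1 else 0 := by
  split_ifs with h
  · obtain ⟨a, ha, hab, hpa⟩ := h
    rw [Finset.sum_eq_single_of_mem a ha, if_pos ⟨hab, hpa⟩]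
    exact fun a' ha' hne => if_neg fun ⟨hab', _⟩ => hne (hf ha' ha (hab'.trans hab.symm))
  · exact Finset.sum_eq_zero fun a ha => if_neg fun hpa => h ⟨a, ha, hpa⟩

theorem tab_update (box : ℤ → ℕ → ℕ → ℚ) (s : ℤ) (c : ℕ → ℕ) {i : ℕ} (hi1 : 1 ≤ i) (hik : i ≤ k)
    (e : ℕ) :
    tab box s k (Function.update c i e) =
      tab box s k c - box (s + k - i) (c i) + box (s + k - i) e := by
  have hi : i ∈ Finset.Icc 1 k := Finset.mem_Icc.2 ⟨hi1, hik⟩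
  simp only [tab, Function.apply_update (fun (l : ℕ) => box (s + k - l))]
  rw [Finset.sum_update_of_mem hi, Finset.sdiff_singleton_eq_erase, Finset.sum_erase_eq_sub hi,
    add_comm]

end Columns

section Action

variable {n : ℕ} {ι : ℕ → ℕ} {s : ℤ} {k : ℕ} {c : ℕ → ℕ} {m j i : ℕ}

/-- Case (a) of the action of `S_{m,j}` on the column `[c 1, …, c k]_s`: the entry `c i = j` can be
raised to `j + 1`, and its box contains `x_{m,j}`. -/
def RaisesEntry (ι : ℕ → ℕ) (n : ℕ) (s : ℤ) (k : ℕ) (c : ℕ → ℕ) (m j i : ℕ) : Prop :=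
  1 ≤ i ∧ i ≤ k ∧ c i = j ∧ (i < k → c (i + 1) ≠ j + 1) ∧
    (m : ℤ) = s + (k : ℤ) - (i : ℤ) + (PABC ι n j : ℤ)

/-- Case (b) of the action of `S_{m,j}` on the column `[c 1, …, c k]_s`: the entry `c i = j + 1` can
be lowered to `j`, and its box contains `-x_{m,j}`. -/
def LowersEntry (ι : ℕ → ℕ) (n : ℕ) (s : ℤ) (k : ℕ) (c : ℕ → ℕ) (m j i : ℕ) : Prop :=
  1 ≤ i ∧ i ≤ k ∧ c i = j + 1 ∧ (1 < i → c (i - 1) ≠ j) ∧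
    (m : ℤ) = s + (k : ℤ) - (i : ℤ) + 1 + (PABC ι n j : ℤ)

theorem tab_boxA_apply_occPos (hadm : Admissible n ι) (hc : Set.InjOn c (Set.Icc 1 k))
    (hj : j ∈ Set.Icc 1 n) (hm : 1 ≤ m) :
    tab (boxA ι n) s k c (occPos ι j m) =
      (if ∃ i ∈ (Finset.Icc 1 k : Finset ℕ), c i = j ∧ (m : ℤ) = s + k - i + PABC ι n j
        then 1 else 0) -
      (if ∃ i ∈ (Finset.Icc 1 k : Finset ℕ), c i = j + 1 ∧ (m : ℤ) = s + k - i + 1 + PABC ι n j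
        then 1 else 0) := by
  rw [← Finset.coe_Icc] at hc
  rw [tab, Finset.sum_apply, ← sum_ite_eq_ite_exists hc j,
    ← sum_ite_eq_ite_exists hc (j + 1), ← Finset.sum_sub_distrib]
  exact Finset.sum_congr rfl fun i _ => boxA_apply_occPos hadm hj hm _ _

theorem tab_apply_of_raisesEntry (hadm : Admissible n ι) (hc : StrictMonoOn c (Set.Icc 1 k))
    (hj : j ∈ Set.Icc 1 n) (hm : 1 ≤ m) (h : RaisesEntry ι n s k c m j i) :
    tab (boxA ι n) s k c (occPos ι j m) = 1 := by
  obtain ⟨hi1, hik, hci, hnext, hmi⟩ := h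
  rw [tab_boxA_apply_occPos hadm hc.injOn hj hm,
    if_pos ⟨i, Finset.mem_Icc.2 ⟨hi1, hik⟩, hci, hmi⟩, if_neg, sub_zero]
  rintro ⟨l, hl, hcl, -⟩
  have hl := Finset.mem_Icc.1 hl
  obtain rfl := eq_add_one_of_apply_eq_add_one hc ⟨hi1, hik⟩ hl (by rw [hcl, hci])
  exact hnext hl.2 hcl

theorem tab_apply_of_lowersEntry (hadm : Admissible n ι) (hc : StrictMonoOn c (Set.Icc 1 k))
    (hj : j ∈ Set.Icc 1 n) (hm : 1 ≤ m) (h : LowersEntry ι n s k c m j i) :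
    tab (boxA ι n) s k c (occPos ι j m) = -1 := by
  obtain ⟨hi1, hik, hci, hprev, hmi⟩ := h
  rw [tab_boxA_apply_occPos hadm hc.injOn hj hm, if_neg,
    if_pos ⟨i, Finset.mem_Icc.2 ⟨hi1, hik⟩, hci, hmi⟩, zero_sub]
  rintro ⟨l, hl, hcl, -⟩
  have hl := Finset.mem_Icc.1 hl
  obtain rfl := eq_add_one_of_apply_eq_add_one hc hl ⟨hi1, hik⟩ (by rw [hci, hcl])
  exact hprev (by omega) hcl

theorem tab_apply_of_not_raisesEntry_of_not_lowersEntry (hadm : Admissible n ι)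
    (hc : Set.InjOn c (Set.Icc 1 k)) (hj : j ∈ Set.Icc 1 n) (hm : 1 ≤ m)
    (hraise : ¬∃ i, RaisesEntry ι n s k c m j i) (hlower : ¬∃ i, LowersEntry ι n s k c m j i) :
    tab (boxA ι n) s k c (occPos ι j m) = 0 := by
  rw [tab_boxA_apply_occPos hadm hc hj hm, sub_eq_zero]
  refine if_congr ⟨?_, ?_⟩ rfl rfl
  · rintro ⟨i, hi, hci, hmi⟩
    obtain ⟨hi1, hik⟩ := Finset.mem_Icc.1 hi
    obtain ⟨hlt, hnext⟩ : i < k ∧ c (i + 1) = j + 1 := by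
      by_contra hnot
      exact hraise ⟨i, hi1, hik, hci, fun h h' => hnot ⟨h, h'⟩, hmi⟩
    exact ⟨i + 1, Finset.mem_Icc.2 ⟨by omega, hlt⟩, hnext, by omega⟩
  · rintro ⟨i, hi, hci, hmi⟩
    obtain ⟨hi1, hik⟩ := Finset.mem_Icc.1 hi
    obtain ⟨hlt, hprev⟩ : 1 < i ∧ c (i - 1) = j := by
      by_contra hnot
      exact hlower ⟨i, hi1, hik, hci, fun h h' => hnot ⟨h, h'⟩, hmi⟩
    exact ⟨i - 1, Finset.mem_Icc.2 ⟨by omega, by omega⟩, hprev, by omega⟩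

theorem IsColumn.update_of_raisesEntry (hc : IsColumn n k c) (hj : j ≤ n)
    (h : RaisesEntry ι n s k c m j i) : IsColumn n k (Function.update c i (j + 1)) := by
  obtain ⟨hi1, hik, rfl, hnext, -⟩ := h
  refine hc.update (Nat.le_add_left 1 _) (Nat.add_le_add_right hj 1) (fun hi => ?_) fun hi => ?_
  · have := hc.lt_succ (i - 1) (by omega) (by omega)
    rw [Nat.sub_add_cancel hi1] at this
    omega
  · exact lt_of_le_of_ne (hc.lt_succ i hi1 hi) (hnext hi).symm

theorem IsColumn.update_of_lowersEntry (hc : IsColumn n k c) (hj : 1 ≤ j)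
    (h : LowersEntry ι n s k c m j i) : IsColumn n k (Function.update c i j) := by
  obtain ⟨hi1, hik, hci, hprev, -⟩ := h
  have hjn := (hc.range i hi1 hik).2
  refine hc.update hj (by omega) (fun hi => ?_) fun hi => ?_
  · have hlt := hc.lt_succ (i - 1) (by omega) (by omega)
    rw [Nat.sub_add_cancel hi1] at hlt
    have := hprev hi
    omega
  · have := hc.lt_succ i hi1 hi
    omega

theorem Ssj_tab_of_raisesEntry (hadm : Admissible n ι) (hadap : Adapted n (cartanA n) ι)
    (hc : StrictMonoOn c (Set.Icc 1 k)) (hj : j ∈ Set.Icc 1 n) (hm : 1 ≤ m)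
    (h : RaisesEntry ι n s k c m j i) :
    Ssj (cartanA n) ι m j (tab (boxA ι n) s k c) =
      tab (boxA ι n) s k (Function.update c i (j + 1)) := by
  rw [Ssj_of_apply_eq_one (tab_apply_of_raisesEntry hadm hc hj hm h)]
  obtain ⟨hi1, hik, hci, -, hmi⟩ := h
  rw [tab_update _ _ _ hi1 hik, hci, boxA_add_one hadm hadap hj (by omega), hmi]
  abel

theorem Ssj_tab_of_lowersEntry (hadm : Admissible n ι) (hadap : Adapted n (cartanA n) ι)
    (hkn : k ≤ n) (hc : IsColumn n k c) (hs : 1 - (PABC ι n k : ℤ) ≤ s) (hj : j ∈ Set.Icc 1 n)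
    (hm : 1 ≤ m) (h : LowersEntry ι n s k c m j i) :
    Ssj (cartanA n) ι m j (tab (boxA ι n) s k c) =
      tab (boxA ι n) s k (Function.update c i j) := by
  rw [Ssj_of_apply_eq_neg_one (hadm.frequently_eq hj) hm
    (tab_apply_of_lowersEntry hadm hc.strictMonoOn hj hm h)]
  have hlowered := hc.update_of_lowersEntry hj.1 h
  obtain ⟨hi1, hik, hci, -, hmi⟩ := h
  have hij : i ≤ j := by simpa only [Function.update_self] using hlowered.le_apply hi1 hik
  -- Hence `2 ≤ m`, so the `β_{m-1,j}` being added is not the conventional `β_0 = 0`.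
  have one_le : 1 ≤ s + k - i + PABC ι n j := by
    obtain ⟨d, rfl⟩ := Nat.exists_eq_add_of_le hik
    have h₁ := PABC_add_le (ι := ι) hi1 hkn
    have h₂ := PABC_le_PABC (ι := ι) hij hj.2
    omega
  rw [tab_update _ _ _ hi1 hik, hci, boxA_add_one hadm hadap hj one_le, hmi,
    add_right_comm, add_sub_cancel_right]
  abel

theorem Ssj_tab_of_not_raisesEntry_of_not_lowersEntry {A : ℕ → ℕ → ℤ} (hadm : Admissible n ι)
    (hc : Set.InjOn c (Set.Icc 1 k)) (hj : j ∈ Set.Icc 1 n) (hm : 1 ≤ m)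
    (hraise : ¬∃ i, RaisesEntry ι n s k c m j i) (hlower : ¬∃ i, LowersEntry ι n s k c m j i) :
    Ssj A ι m j (tab (boxA ι n) s k c) = tab (boxA ι n) s k c :=
  Ssj_of_apply_eq_zero
    (tab_apply_of_not_raisesEntry_of_not_lowersEntry hadm hc hj hm hraise hlower)

theorem IsColumn.tab_mem_TabA (hc : IsColumn n k c) (hk1 : 1 ≤ k) (hkn : k ≤ n)
    (hs : 1 - (PABC ι n k : ℤ) ≤ s) : tab (boxA ι n) s k c ∈ TabA ι n :=
  ⟨k, s, c, hk1, hkn, hc.range, hc.lt_succ, hs, rfl⟩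

theorem Ssj_mem_TabA (hadm : Admissible n ι) (hadap : Adapted n (cartanA n) ι)
    (hj : j ∈ Set.Icc 1 n) (hm : 1 ≤ m) {T : ℕ → ℚ} (hT : T ∈ TabA ι n) :
    Ssj (cartanA n) ι m j T ∈ TabA ι n := by
  obtain ⟨k, s, c, hk1, hkn, hrange, hlt, hs, rfl⟩ := hT
  have hc : IsColumn n k c := ⟨hrange, hlt⟩
  by_cases hraise : ∃ i, RaisesEntry ι n s k c m j i
  · obtain ⟨i, hi⟩ := hraise
    rw [Ssj_tab_of_raisesEntry hadm hadap hc.strictMonoOn hj hm hi]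
    exact (hc.update_of_raisesEntry hj.2 hi).tab_mem_TabA hk1 hkn hs
  by_cases hlower : ∃ i, LowersEntry ι n s k c m j i
  · obtain ⟨i, hi⟩ := hlower
    rw [Ssj_tab_of_lowersEntry hadm hadap hkn hc hs hj hm hi]
    exact (hc.update_of_lowersEntry hj.1 hi).tab_mem_TabA hk1 hkn hs
  rw [Ssj_tab_of_not_raisesEntry_of_not_lowersEntry hadm hc.strictMonoOn.injOn hj hm hraise
    hlower]
  exact hc.tab_mem_TabA hk1 hkn hs

end Action

/-- Proposition 4.1: the explicit action of `S_{m,j}` on a type A tableau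
`T = [j_1,…,j_k]^A_s ∈ Tab_{A,ι}`, and closure of `Tab_{A,ι}` under all `S_{m,j}`. -/
theorem SA_action (n : ℕ) (hn : 2 ≤ n) (ι : ℕ → ℕ)
    (hadm : Admissible n ι) (hadap : Adapted n (cartanA n) ι)
    (k : ℕ) (s : ℤ) (jf : ℕ → ℕ)
    (hk1 : 1 ≤ k) (hkn : k ≤ n)
    (hrange : ∀ i, 1 ≤ i → i ≤ k → 1 ≤ jf i ∧ jf i ≤ n + 1)
    (hmono : ∀ i, 1 ≤ i → i < k → jf i < jf (i + 1))
    (hs : 1 - (PABC ι n k : ℤ) ≤ s)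
    (m : ℕ) (hm : 1 ≤ m) (j : ℕ) (hj1 : 1 ≤ j) (hjn : j ≤ n) :
    (∀ i, 1 ≤ i → i ≤ k → jf i = j → (i < k → jf (i + 1) ≠ j + 1) →
        (m : ℤ) = s + (k : ℤ) - (i : ℤ) + (PABC ι n j : ℤ) →
        Ssj (cartanA n) ι m j (tab (boxA ι n) s k jf) =
          tab (boxA ι n) s k (Function.update jf i (j + 1))) ∧
    (∀ i, 1 ≤ i → i ≤ k → jf i = j + 1 → (1 < i → jf (i - 1) ≠ j) →
        (m : ℤ) = s + (k : ℤ) - (i : ℤ) + 1 + (PABC ι n j : ℤ) →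
        Ssj (cartanA n) ι m j (tab (boxA ι n) s k jf) =
          tab (boxA ι n) s k (Function.update jf i j)) ∧
    ((¬ ∃ i, 1 ≤ i ∧ i ≤ k ∧ jf i = j ∧ (i < k → jf (i + 1) ≠ j + 1) ∧
        (m : ℤ) = s + (k : ℤ) - (i : ℤ) + (PABC ι n j : ℤ)) →
     (¬ ∃ i, 1 ≤ i ∧ i ≤ k ∧ jf i = j + 1 ∧ (1 < i → jf (i - 1) ≠ j) ∧
        (m : ℤ) = s + (k : ℤ) - (i : ℤ) + 1 + (PABC ι n j : ℤ)) →
     Ssj (cartanA n) ι m j (tab (boxA ι n) s k jf) = tab (boxA ι n) s k jf) ∧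
    (∀ m' j', 1 ≤ m' → 1 ≤ j' → j' ≤ n →
      Ssj (cartanA n) ι m' j' (tab (boxA ι n) s k jf) ∈ TabA ι n) := by
  have hc : IsColumn n k jf := ⟨hrange, hmono⟩
  have hj : j ∈ Set.Icc 1 n := ⟨hj1, hjn⟩
  refine ⟨fun i hi1 hik hji hnext hmi => ?_, fun i hi1 hik hji hprev hmi => ?_, ?_, ?_⟩
  · exact Ssj_tab_of_raisesEntry hadm hadap hc.strictMonoOn hj hm ⟨hi1, hik, hji, hnext, hmi⟩
  · exact Ssj_tab_of_lowersEntry hadm hadap hkn hc hs hj hm ⟨hi1, hik, hji, hprev, hmi⟩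
  · exact Ssj_tab_of_not_raisesEntry_of_not_lowersEntry hadm hc.strictMonoOn.injOn hj hm
  · exact fun m' j' hm' hj1' hjn' =>
      Ssj_mem_TabA hadm hadap ⟨hj1', hjn'⟩ hm' (hc.tab_mem_TabA hk1 hkn hs)
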